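/- For every integer e ≥ 1 and general points: ℓ(L(6e, 6e−6, 6^{2e})) = 0 (virtual dimension −15), ℓ(L(6e+1, 6e−5, 6^{2e})) = 2 (virtual dimension −8), ℓ(L(6e+2, 6e−4, 6^{2e})) = 5 (virtual dimension −1), ℓ(L(6e+3, 6e−3, 6^{2e})) = 9 (virtual dimension 6), and ℓ(L(6e+4, 6e−2, 6^{2e})) = 14 (virtual dimension 13); in particular all five systems are special. -/

import Mathlib

open MvPolynomial

/-- The iterated partial derivative corresponding to the multi-index `ν`. -/
noncomputable def mderiv (ν : Fin 3 → ℕ) :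
    MvPolynomial (Fin 3) ℂ →ₗ[ℂ] MvPolynomial (Fin 3) ℂ :=
  ((pderiv (R := ℂ) (0 : Fin 3)).toLinearMap ^ ν 0) ∘ₗ
  ((pderiv (R := ℂ) (1 : Fin 3)).toLinearMap ^ ν 1) ∘ₗ
  ((pderiv (R := ℂ) (2 : Fin 3)).toLinearMap ^ ν 2)

/-- The linear system `L(d; m)` of homogeneous forms of degree `d` in three variables
all of whose partial derivatives of order `< m i` vanish at the point `p i`,
i.e. plane curves of degree `d` with multiplicity at least `m i` at `p i`. -/
noncomputable def linSys {k : ℕ} (p : Fin k → Fin 3 → ℂ) (d : ℕ) (m : Fin k → ℕ) :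
    Submodule ℂ (MvPolynomial (Fin 3) ℂ) :=
  (homogeneousSubmodule (Fin 3) ℂ d) ⊓
    ⨅ (i : Fin k), ⨅ (ν : Fin 3 → ℕ), ⨅ (_ : ν 0 + ν 1 + ν 2 < m i),
      LinearMap.ker ((aeval (p i)).toLinearMap ∘ₗ mderiv ν)

/-- The projective dimension `ℓ` of the linear system (`-1` means empty). -/
noncomputable def projDim {k : ℕ} (p : Fin k → Fin 3 → ℂ) (d : ℕ) (m : Fin k → ℕ) : ℤ :=
  (Module.finrank ℂ (linSys p d m) : ℤ) - 1

/-- The virtual dimension `v = d(d+3)/2 - ∑ mᵢ(mᵢ+1)/2`. -/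
def virtDim {k : ℕ} (d : ℕ) (m : Fin k → ℕ) : ℤ :=
  ((d : ℤ) * (d + 3)) / 2 - ∑ i : Fin k, ((m i : ℤ) * (m i + 1)) / 2

/-- The quasi-homogeneous multiplicity vector `(m₀, 6, …, 6)` on `n + 1` points. -/
def qh (n m0 : ℕ) : Fin (n + 1) → ℕ := fun i => if i = 0 then m0 else 6

/-- A property `Q` of configurations of `k` points of `ℙ²` (given by nonzero homogeneous
coordinate vectors) holds for points in general position: there is a nonzero polynomial
in the coordinates such that `Q` holds whenever it does not vanish. -/
def Generically (k : ℕ) (Q : (Fin k → Fin 3 → ℂ) → Prop) : Prop :=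
  ∃ P : MvPolynomial (Fin k × Fin 3) ℂ, P ≠ 0 ∧
    ∀ p : Fin k → Fin 3 → ℂ, (∀ i, p i ≠ 0) →
      eval (fun x => p x.1 x.2) P ≠ 0 → Q p

/-!
Through `2e` points of the plane and `p₀` there passes a curve `C` of degree `e` with multiplicity
`e - 1` at `p₀`; for general points it is a `(-1)`-curve. Let `P` be the pencil of lines through
`p₀`. The five systems are the systems `|6C + jP|` with `0 ≤ j ≤ 4`. More generally let
`L = |μC + jP|`. Since `L · C = j - μ`, the curve `C` splits off `μ - j` times when `j < μ`, and the
residual system `|j(C + P)|` attains its virtual dimension `j(j + 3)/2`.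

The lower bound holds for all points, by counting conditions on `|j(C + P)|` and multiplying by
powers of `C`. For the upper bound it suffices, by semicontinuity, to find one special position of
the points. There `C` is the monomial curve `x ^ e = y ^ (e - 1) z` with its points
`(t ^ (e - 1), t ^ e, 1)` and `p₀ = (0, 0, 1)`: restricting a form to the parametrization gives a
polynomial in `t` with many prescribed zeros, and the kernel of the restriction consists of the
multiples of `C`.
-/

section Multiplicity

variable {σ R : Type*}

/-- The Taylor expansion `F(p + X)` of `F` at the point `p`. -/
noncomputable def taylorAt [CommSemiring R] (p : σ → R) :
    MvPolynomial σ R →ₐ[R] MvPolynomial σ R :=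
  aeval fun i => X i + C (p i)

/-- The multiplicity of the hypersurface `F = 0` at the point `p`, i.e. the least degree of a
monomial in the Taylor expansion of `F` at `p`; it is `⊤` for `F = 0`. -/
noncomputable def multAt [CommSemiring R] (p : σ → R) (F : MvPolynomial σ R) : ℕ∞ :=
  (taylorAt p F : MvPowerSeries σ R).order

@[simp]
lemma taylorAt_X [CommSemiring R] (p : σ → R) (i : σ) : taylorAt p (X i) = X i + C (p i) :=
  aeval_X _ _

lemma constantCoeff_taylorAt [CommSemiring R] (p : σ → R) (F : MvPolynomial σ R) :
    constantCoeff (taylorAt p F) = eval p F := by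
  induction F using MvPolynomial.induction_on with
  | C c => simp
  | add F G hF hG => simp only [map_add, hF, hG]
  | mul_X F i hF => simp [hF]

lemma pderiv_taylorAt [CommSemiring R] (p : σ → R) (i : σ) (F : MvPolynomial σ R) :
    pderiv i (taylorAt p F) = taylorAt p (pderiv i F) := by
  classical
  induction F using MvPolynomial.induction_on with
  | C c => simp
  | add F G hF hG => simp only [map_add, hF, hG]
  | mul_X F j hF =>
    by_cases hij : j = i
    · simp [hF, hij]
    · simp [hF, pderiv_X_of_ne hij]

lemma natCast_le_multAt_iff [CommSemiring R] {p : σ → R} {F : MvPolynomial σ R} {m : ℕ} :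
    m ≤ multAt p F ↔ ∀ ν : σ →₀ ℕ, ν.degree < m → coeff ν (taylorAt p F) = 0 := by
  refine ⟨fun h ν hν => ?_, fun h => MvPowerSeries.nat_le_order fun ν hν => ?_⟩
  · rw [← MvPolynomial.coeff_coe]
    exact MvPowerSeries.coeff_of_lt_order (lt_of_lt_of_le (by exact_mod_cast hν) h)
  · rw [MvPolynomial.coeff_coe, h ν hν]

lemma multAt_le_degree [CommSemiring R] {p : σ → R} {F : MvPolynomial σ R} {ν : σ →₀ ℕ}
    (h : coeff ν (taylorAt p F) ≠ 0) : multAt p F ≤ ν.degree :=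
  MvPowerSeries.order_le (by rwa [MvPolynomial.coeff_coe])

lemma multAt_le_one [CommSemiring R] {p : σ → R} {F : MvPolynomial σ R} (i : σ)
    (h : eval p (pderiv i F) ≠ 0) : multAt p F ≤ 1 := by
  rw [← constantCoeff_taylorAt, ← pderiv_taylorAt, constantCoeff_eq, coeff_pderiv] at h
  simpa using multAt_le_degree (left_ne_zero_of_mul h)

lemma multAt_mul [CommSemiring R] [NoZeroDivisors R] (p : σ → R) (F G : MvPolynomial σ R) :
    multAt p (F * G) = multAt p F + multAt p G := by
  rw [multAt, map_mul, MvPolynomial.coe_mul, MvPowerSeries.order_mul, multAt, multAt]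

lemma taylorAt_neg_taylorAt [CommRing R] (p : σ → R) (F : MvPolynomial σ R) :
    taylorAt (-p) (taylorAt p F) = F := by
  have h : (taylorAt (-p)).comp (taylorAt p) = AlgHom.id R (MvPolynomial σ R) := by
    ext i : 1
    simp
  exact DFunLike.congr_fun h F

lemma totalDegree_taylorAt_le [CommSemiring R] (p : σ → R) (F : MvPolynomial σ R) :
    (taylorAt p F).totalDegree ≤ F.totalDegree := by
  rcases subsingleton_or_nontrivial R with _ | _
  · simp [Subsingleton.elim F 0]
  rw [taylorAt, aeval_def, eval₂_eq]
  refine totalDegree_finsetSum_le fun ν hν => (totalDegree_mul _ _).trans ?_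
  rw [algebraMap_eq, totalDegree_C, zero_add]
  refine (totalDegree_finsetProd _ _).trans (le_trans ?_ (le_totalDegree hν))
  refine Finset.sum_le_sum fun i _ => (totalDegree_pow _ _).trans ?_
  refine (Nat.mul_le_mul_left _ ?_).trans_eq (mul_one _)
  exact (totalDegree_add _ _).trans (by simp)

lemma multAt_le_totalDegree [CommRing R] (p : σ → R) {F : MvPolynomial σ R} (hF : F ≠ 0) :
    multAt p F ≤ F.totalDegree := by
  have hF' : taylorAt p F ≠ 0 := fun h => hF (by rw [← taylorAt_neg_taylorAt p F, h, map_zero])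
  obtain ⟨ν, hν⟩ := ne_zero_iff.1 hF'
  calc multAt p F ≤ ν.degree := multAt_le_degree hν
    _ ≤ (taylorAt p F).totalDegree := by exact_mod_cast le_totalDegree (mem_support_iff.2 hν)
    _ ≤ F.totalDegree := by exact_mod_cast totalDegree_taylorAt_le p F

/-- Euler's identity at the point `p`, read off on the Taylor coefficient of index `ν`. -/
lemma coeff_taylorAt_of_isHomogeneous [Fintype σ] [CommRing R] {d : ℕ} {F : MvPolynomial σ R}
    (hF : F.IsHomogeneous d) (p : σ → R) (ν : σ →₀ ℕ) :
    ((d : R) - ν.degree) * coeff ν (taylorAt p F) =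
      ∑ i, p i * (coeff (ν + Finsupp.single i 1) (taylorAt p F) * (ν i + 1)) := by
  classical
  have coeff_X_mul_pderiv (i : σ) (G : MvPolynomial σ R) :
      coeff ν (X i * pderiv i G) = ν i * coeff ν G := by
    rw [coeff_X_mul']
    split_ifs with hi
    · rw [coeff_pderiv, Finsupp.sub_add_single_one_cancel (Finsupp.mem_support_iff.1 hi)]
      have : 1 ≤ ν i := Nat.one_le_iff_ne_zero.2 (Finsupp.mem_support_iff.1 hi)
      simp [Nat.cast_sub this, mul_comm]
    · simp [Finsupp.notMem_support_iff.1 hi]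
  have euler := congrArg (fun G => coeff ν (taylorAt p G)) hF.sum_X_mul_pderiv
  simp only [map_sum, map_nsmul, map_mul, taylorAt_X, ← pderiv_taylorAt, add_mul, coeff_sum,
    coeff_add, coeff_X_mul_pderiv, coeff_C_mul, coeff_pderiv, coeff_smul,
    Finset.sum_add_distrib, ← Finset.sum_mul] at euler
  rw [sub_mul, ← nsmul_eq_mul, ← euler, Finsupp.degree_eq_sum]
  simp

lemma pow_dvd_aeval [CommRing R] {B : Type*} [CommRing B] [Algebra R B] {p : σ → R}
    {F : MvPolynomial σ R} {m : ℕ} (hF : m ≤ multAt p F) {v : σ → B} {D : B}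
    (hv : ∀ i, D ∣ v i - algebraMap R B (p i)) : D ^ m ∣ aeval v F := by
  have taylor : aeval v = (aeval fun i => v i - algebraMap R B (p i)).comp (taylorAt p) := by
    ext i
    simp
  rw [taylor, AlgHom.comp_apply, aeval_def, eval₂_eq]
  refine Finset.dvd_sum fun ν hν => Dvd.dvd.mul_left ?_ _
  have hm : m ≤ ν.degree := by
    by_contra! h
    exact mem_support_iff.1 hν (natCast_le_multAt_iff.1 hF ν h)
  calc D ^ m ∣ D ^ ν.degree := pow_dvd_pow D hm
    _ = ∏ i ∈ ν.support, D ^ ν i := by rw [Finsupp.degree_apply, Finset.prod_pow_eq_pow_sum]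
    _ ∣ _ := Finset.prod_dvd_prod_of_dvd _ _ fun i _ => pow_dvd_pow_of_dvd (hv i) _

end Multiplicity

section LinearAlgebra

variable {K V W : Type*} [Field K] [AddCommGroup V] [Module K V] [AddCommGroup W] [Module K W]

lemma finrank_map_add_finrank_inf_ker (U : Submodule K V) [FiniteDimensional K U] (φ : V →ₗ[K] W) :
    Module.finrank K (U.map φ) + Module.finrank K ↥(U ⊓ LinearMap.ker φ) = Module.finrank K U := by
  rw [← LinearMap.finrank_range_add_finrank_ker (φ.domRestrict U), LinearMap.range_domRestrict,
    LinearMap.ker_domRestrict, ← Submodule.finrank_map_subtype_eq, Submodule.map_comap_subtype]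

lemma finrank_le_finrank_inf_iInf_ker_add_card {ι : Type*} [Fintype ι] (U : Submodule K V)
    [FiniteDimensional K U] (φ : ι → V →ₗ[K] K) :
    Module.finrank K U ≤ Module.finrank K ↥(U ⊓ ⨅ i, LinearMap.ker (φ i)) + Fintype.card ι := by
  rw [← LinearMap.ker_pi, ← finrank_map_add_finrank_inf_ker U (LinearMap.pi φ), add_comm]
  gcongr
  exact (Submodule.finrank_le _).trans_eq (Module.finrank_fintype_fun_eq_card K)

end LinearAlgebra

section LinearSystem

lemma coeff_pderiv_pow {σ R : Type*} [CommSemiring R] (i : σ) (n : ℕ) (F : MvPolynomial σ R)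
    (ν : σ →₀ ℕ) : coeff ν (((pderiv i).toLinearMap ^ n) F) =
      coeff (ν + Finsupp.single i n) F * (ν i + 1).ascFactorial n := by
  induction n generalizing F with
  | zero => simp
  | succ n ih =>
    have step := coeff_pderiv (i := i) F (ν + Finsupp.single i n)
    rw [add_assoc, ← Finsupp.single_add] at step
    rw [pow_succ, Module.End.mul_apply, ih, Nat.ascFactorial_succ, Derivation.coeFn_coe, step,
      Finsupp.add_apply, Finsupp.single_eq_same, add_right_comm (ν i)]
    push_cast
    ring

open Nat in
lemma eval_mderiv (p : Fin 3 → ℂ) (ν : Fin 3 →₀ ℕ) (F : MvPolynomial (Fin 3) ℂ) :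
    eval p (mderiv ν F) = (∏ i, (ν i)! : ℕ) * coeff ν (taylorAt p F) := by
  have comm (i : Fin 3) : Commute (taylorAt p).toLinearMap (pderiv (R := ℂ) i).toLinearMap :=
    LinearMap.ext fun G => (pderiv_taylorAt p i G).symm
  have comm_mderiv : Commute (taylorAt p).toLinearMap (mderiv ν) :=
    ((comm 0).pow_right _).mul_right (((comm 1).pow_right _).mul_right ((comm 2).pow_right _))
  have taylor : taylorAt p (mderiv ν F) = mderiv ν (taylorAt p F) :=
    LinearMap.congr_fun comm_mderiv F
  have hν : ν = Finsupp.single 0 (ν 0) + Finsupp.single 1 (ν 1) + Finsupp.single 2 (ν 2) := by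
    ext i
    fin_cases i <;> simp
  have factorials : (∏ i, (ν i)! : ℕ) =
      (((ν 0)! * (ν 1)! * (ν 2)! : ℕ) : ℂ) := by rw [Fin.prod_univ_three]
  rw [← constantCoeff_taylorAt, taylor, constantCoeff_eq, factorials]
  simp only [mderiv, LinearMap.comp_apply, coeff_pderiv_pow]
  conv_rhs => rw [hν]
  simp only [zero_add, Finsupp.coe_add, Pi.add_apply, ne_eq, Fin.reduceEq, not_false_eq_true,
    Finsupp.single_eq_of_ne, Finsupp.single_eq_same, add_zero, Finsupp.coe_zero, Pi.zero_apply,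
    Nat.one_ascFactorial, one_ne_zero, zero_ne_one, Nat.cast_mul]
  ring

lemma mem_linSys {k : ℕ} {p : Fin k → Fin 3 → ℂ} {d : ℕ} {m : Fin k → ℕ}
    {F : MvPolynomial (Fin 3) ℂ} :
    F ∈ linSys p d m ↔ F.IsHomogeneous d ∧ ∀ i, (m i : ℕ∞) ≤ multAt (p i) F := by
  simp only [linSys, Submodule.mem_inf, mem_homogeneousSubmodule, Submodule.mem_iInf,
    LinearMap.mem_ker, natCast_le_multAt_iff]
  refine and_congr_right fun _ => forall_congr' fun i => ?_
  rw [← Finsupp.equivFunOnFinite.forall_congr_right]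
  refine forall_congr' fun ν => imp_congr ?_ ?_
  · simp [Finsupp.degree_eq_sum, Fin.sum_univ_three]
  · change eval (p i) (mderiv ν F) = 0 ↔ _
    simp [eval_mderiv, Finset.prod_eq_zero_iff, Nat.factorial_ne_zero]

lemma exists_finset_degree_add_one_eq (m : ℕ) : ∃ s : Finset (Fin 3 →₀ ℕ),
    s.card = (m + 1).choose 2 ∧ ∀ ν, ν ∈ s ↔ ν.degree + 1 = m := by
  cases m with
  | zero => exact ⟨∅, by simp⟩
  | succ n =>
    refine ⟨Finset.univ.finsuppAntidiag n, ?_, fun ν => ?_⟩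
    · rw [Finset.card_finsuppAntidiag_nat_eq_choose, Finset.card_univ, Fintype.card_fin,
        show 3 + n - 1 = n + 2 by omega]
      exact Nat.choose_symm_add
    · simp [Finset.mem_finsuppAntidiag, Finsupp.degree_eq_sum]

lemma finrank_homogeneousSubmodule (n : ℕ) :
    Module.finrank ℂ (homogeneousSubmodule (Fin 3) ℂ n) = (n + 2).choose 2 := by
  obtain ⟨s, hcard, hs⟩ := exists_finset_degree_add_one_eq (n + 1)
  have hS : {ν : Fin 3 →₀ ℕ | ν.degree = n} = s := by
    ext ν
    simp [hs]
  rw [homogeneousSubmodule_eq_finsupp_supported, hS,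
    (AddMonoidAlgebra.supportedEquivFinsupp _).finrank_eq, Module.finrank_finsupp_self]
  simpa using hcard

instance (d : ℕ) : FiniteDimensional ℂ (homogeneousSubmodule (Fin 3) ℂ d) :=
  Module.finite_of_finrank_pos (by
    rw [finrank_homogeneousSubmodule]
    exact Nat.choose_pos (by omega))

instance {k : ℕ} (p : Fin k → Fin 3 → ℂ) (d : ℕ) (m : Fin k → ℕ) :
    FiniteDimensional ℂ (linSys p d m) :=
  Submodule.finiteDimensional_of_le (inf_le_left (a := homogeneousSubmodule (Fin 3) ℂ d))

lemma natCast_le_multAt_of_isHomogeneous {σ K : Type*} [Finite σ] [Field K] [CharZero K] {d m : ℕ}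
    {F : MvPolynomial σ K} (hF : F.IsHomogeneous d) (hm : m ≤ d) (p : σ → K)
    (h : ∀ ν : σ →₀ ℕ, ν.degree + 1 = m → coeff ν (taylorAt p F) = 0) : m ≤ multAt p F := by
  have := Fintype.ofFinite σ
  rw [natCast_le_multAt_iff]
  intro ν hν
  induction hk : m - ν.degree generalizing ν with
  | zero => omega
  | succ k ih =>
    rcases Nat.eq_zero_or_pos k with rfl | hkpos
    · exact h ν (by omega)
    · have euler := coeff_taylorAt_of_isHomogeneous hF p ν
      rw [Finset.sum_eq_zero, mul_eq_zero, sub_eq_zero, Nat.cast_inj] at euler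
      · exact euler.resolve_left (by omega)
      · intro i _
        have hdeg : (ν + Finsupp.single i 1).degree = ν.degree + 1 := by simp
        rw [ih _ (by omega) (by omega), zero_mul, mul_zero]

lemma finrank_linSys_ge {k : ℕ} (p : Fin k → Fin 3 → ℂ) {d : ℕ} {m : Fin k → ℕ}
    (hm : ∀ i, m i ≤ d) :
    (d + 2).choose 2 ≤ Module.finrank ℂ (linSys p d m) + ∑ i, (m i + 1).choose 2 := by
  choose s hcard hs using exists_finset_degree_add_one_eq
  let topCoeff (c : Σ i, s (m i)) : MvPolynomial (Fin 3) ℂ →ₗ[ℂ] ℂ :=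
    lcoeff ℂ c.2.1 ∘ₗ (taylorAt (p c.1)).toLinearMap
  have hle : homogeneousSubmodule (Fin 3) ℂ d ⊓ ⨅ c, LinearMap.ker (topCoeff c) ≤
      linSys p d m := by
    intro F hF
    simp only [Submodule.mem_inf, mem_homogeneousSubmodule, Submodule.mem_iInf,
      LinearMap.mem_ker] at hF
    exact mem_linSys.2 ⟨hF.1, fun i => natCast_le_multAt_of_isHomogeneous hF.1 (hm i) _
      fun ν hν => hF.2 ⟨i, ν, (hs _ ν).2 hν⟩⟩
  calc (d + 2).choose 2 = Module.finrank ℂ (homogeneousSubmodule (Fin 3) ℂ d) :=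
        (finrank_homogeneousSubmodule d).symm
    _ ≤ _ := finrank_le_finrank_inf_iInf_ker_add_card _ topCoeff
    _ ≤ _ := by
      gcongr
      · exact Submodule.finrank_mono hle
      · simp [hcard]

lemma two_mul_choose_two_succ (n : ℕ) : 2 * ((n + 1).choose 2 : ℤ) = n * (n + 1) := by
  rw [Nat.choose_two_right, Nat.add_sub_cancel, mul_comm (n + 1)]
  exact_mod_cast Nat.mul_div_cancel' (Nat.even_mul_succ_self n).two_dvd

lemma virtDim_eq_choose_sub_sum {k : ℕ} (d : ℕ) (m : Fin k → ℕ) :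
    virtDim d m = ((d + 2).choose 2 : ℤ) - 1 - ∑ i, ((m i + 1).choose 2 : ℤ) := by
  have hd : (d : ℤ) * (d + 3) / 2 = ((d + 2).choose 2 : ℤ) - 1 := by
    have := two_mul_choose_two_succ (d + 1)
    push_cast at this
    exact Int.ediv_eq_of_eq_mul_right two_ne_zero (by linarith)
  have hm (n : ℕ) : (n : ℤ) * (n + 1) / 2 = ((n + 1).choose 2 : ℤ) :=
    Int.ediv_eq_of_eq_mul_right two_ne_zero (two_mul_choose_two_succ n).symm
  simp only [virtDim, hd, hm]

lemma virtDim_le_projDim {k : ℕ} (p : Fin k → Fin 3 → ℂ) {d : ℕ} {m : Fin k → ℕ}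
    (hm : ∀ i, m i ≤ d) : virtDim d m ≤ projDim p d m := by
  have h := finrank_linSys_ge p hm
  rw [virtDim_eq_choose_sub_sum, projDim]
  zify at h
  linarith

end LinearSystem

section CurvePencil

/-- The multiplicity vector `(m₀, μ, …, μ)` on `n + 1` points; `qh` is the case `μ = 6`. -/
def quasiHom (n m₀ μ : ℕ) : Fin (n + 1) → ℕ := fun i => if i = 0 then m₀ else μ

/-- The quasi-homogeneous system `|μC + jP|` on `2e + 1` points, `e = f + 1`, where `C` is the
`(-1)`-curve of degree `e` with multiplicity `e - 1` at `p 0` through the other `2e` points, and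
`P` is the pencil of lines through `p 0`. -/
noncomputable def curvePencilSys {f : ℕ} (p : Fin (2 * (f + 1) + 1) → Fin 3 → ℂ) (μ j : ℕ) :
    Submodule ℂ (MvPolynomial (Fin 3) ℂ) :=
  linSys p (μ * (f + 1) + j) (quasiHom (2 * (f + 1)) (μ * f + j) μ)

variable {f : ℕ} {p : Fin (2 * (f + 1) + 1) → Fin 3 → ℂ}

instance (μ j : ℕ) : FiniteDimensional ℂ (curvePencilSys p μ j) :=
  inferInstanceAs (FiniteDimensional ℂ (linSys _ _ _))

lemma mem_curvePencilSys {μ j : ℕ} {F : MvPolynomial (Fin 3) ℂ} :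
    F ∈ curvePencilSys p μ j ↔ F.IsHomogeneous (μ * (f + 1) + j) ∧
      ((μ * f + j : ℕ) : ℕ∞) ≤ multAt (p 0) F ∧
        ∀ i : Fin (2 * (f + 1)), μ ≤ multAt (p i.succ) F := by
  simp [curvePencilSys, mem_linSys, Fin.forall_fin_succ, quasiHom]

lemma two_mul_virtDim_quasiHom (f μ j : ℕ) :
    2 * virtDim (μ * (f + 1) + j) (quasiHom (2 * (f + 1)) (μ * f + j) μ) =
      j * (j + 3) - (μ - j) * (μ - j - 1) := by
  have hd := two_mul_choose_two_succ (μ * (f + 1) + j + 1)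
  have hm₀ := two_mul_choose_two_succ (μ * f + j)
  have hμ := two_mul_choose_two_succ μ
  rw [virtDim_eq_choose_sub_sum, Fin.sum_univ_succ]
  simp only [quasiHom, Fin.succ_ne_zero, if_true, if_false, Finset.sum_const, Finset.card_univ,
    Fintype.card_fin, nsmul_eq_mul]
  push_cast at hd hm₀ hμ ⊢
  linear_combination hd - hm₀ - 2 * ((f : ℤ) + 1) * hμ

lemma virtDim_quasiHom {f μ j : ℕ} (hj : j + 1 ≤ μ) :
    virtDim (μ * (f + 1) + j) (quasiHom (2 * (f + 1)) (μ * f + j) μ) =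
      ((j + 2).choose 2 : ℤ) - 1 - (μ - j).choose 2 := by
  obtain ⟨i, rfl⟩ := Nat.exists_eq_add_of_le hj
  have hv := two_mul_virtDim_quasiHom f (j + 1 + i) j
  have hj := two_mul_choose_two_succ (j + 1)
  have hi := two_mul_choose_two_succ i
  rw [show j + 1 + i - j = i + 1 by omega]
  push_cast at hv hj
  linarith

lemma sub_le_two_mul_finrank_curvePencilSys (p : Fin (2 * (f + 1) + 1) → Fin 3 → ℂ) (μ j : ℕ) :
    ((j + 1) * (j + 2) - (μ - j) * (μ - j - 1) : ℤ) ≤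
      2 * Module.finrank ℂ (curvePencilSys p μ j) := by
  have h := virtDim_le_projDim p (d := μ * (f + 1) + j)
    (m := quasiHom (2 * (f + 1)) (μ * f + j) μ) fun i => by
    rw [quasiHom]
    split_ifs <;> linarith [Nat.zero_le (μ * f)]
  rw [projDim, ← curvePencilSys] at h
  linarith [two_mul_virtDim_quasiHom f μ j]

lemma exists_ne_zero_mem_curvePencilSys (p : Fin (2 * (f + 1) + 1) → Fin 3 → ℂ) :
    ∃ C ∈ curvePencilSys p 1 0, C ≠ 0 := by
  have h := sub_le_two_mul_finrank_curvePencilSys p 1 0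
  have hpos : 0 < Module.finrank ℂ (curvePencilSys p 1 0) := by
    push_cast at h
    zify
    linarith
  have := Module.finrank_pos_iff.1 hpos
  exact Submodule.exists_mem_ne_zero_of_ne_bot (Submodule.nontrivial_iff_ne_bot.1 this)

lemma mul_mem_curvePencilSys {μ j : ℕ} {C F : MvPolynomial (Fin 3) ℂ}
    (hC : C ∈ curvePencilSys p 1 0) (hF : F ∈ curvePencilSys p μ j) :
    C * F ∈ curvePencilSys p (μ + 1) j := by
  rw [mem_curvePencilSys] at *
  refine ⟨?_, ?_, fun i => ?_⟩
  · convert! hC.1.mul hF.1 using 1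
    ring
  · rw [multAt_mul]
    convert! add_le_add hC.2.1 hF.2.1 using 1
    norm_cast
    ring
  · rw [multAt_mul]
    convert! add_le_add (hC.2.2 i) (hF.2.2 i) using 1
    norm_cast
    ring

lemma finrank_curvePencilSys_le_succ (p : Fin (2 * (f + 1) + 1) → Fin 3 → ℂ) (μ j : ℕ) :
    Module.finrank ℂ (curvePencilSys p μ j) ≤ Module.finrank ℂ (curvePencilSys p (μ + 1) j) := by
  obtain ⟨C, hC, hC0⟩ := exists_ne_zero_mem_curvePencilSys p
  let mulC : curvePencilSys p μ j →ₗ[ℂ] curvePencilSys p (μ + 1) j :=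
    (LinearMap.mulLeft ℂ C).restrict fun _ => mul_mem_curvePencilSys hC
  refine LinearMap.finrank_le_finrank_of_injective (f := mulC) fun F G h => ?_
  exact Subtype.ext (mul_left_cancel₀ hC0 (congrArg Subtype.val h))

lemma choose_two_le_finrank_curvePencilSys (p : Fin (2 * (f + 1) + 1) → Fin 3 → ℂ) (μ j : ℕ) :
    (j + 2).choose 2 ≤ Module.finrank ℂ (curvePencilSys p μ j) + (j + 1 - μ).choose 2 := by
  have of_le (ν : ℕ) (h : ν ≤ j) :
      (j + 2).choose 2 ≤ Module.finrank ℂ (curvePencilSys p ν j) + (j + 1 - ν).choose 2 := by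
    obtain ⟨i, rfl⟩ := Nat.exists_eq_add_of_le h
    have hcount := sub_le_two_mul_finrank_curvePencilSys p ν (ν + i)
    have hj := two_mul_choose_two_succ (ν + i + 1)
    have hi := two_mul_choose_two_succ i
    rw [show ν + i + 1 - ν = i + 1 by omega]
    zify
    push_cast at hcount hj hi
    linarith
  rcases le_total μ j with h | h
  · exact of_le μ h
  · have h_mono : Module.finrank ℂ (curvePencilSys p j j) ≤
        Module.finrank ℂ (curvePencilSys p μ j) :=
      monotone_nat_of_le_succ (f := fun ν => Module.finrank ℂ (curvePencilSys p ν j))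
        (fun ν => finrank_curvePencilSys_le_succ p ν j) h
    have h_base := of_le j le_rfl
    rw [Nat.choose_eq_zero_of_lt (show j + 1 - j < 2 by omega)] at h_base
    omega

end CurvePencil

section Homogeneous

variable {σ R : Type*} [CommRing R]

lemma homogeneousComponent_add_mul {C : MvPolynomial σ R} {n : ℕ} (hC : C.IsHomogeneous n) (j : ℕ)
    (G : MvPolynomial σ R) :
    homogeneousComponent (n + j) (C * G) = C * homogeneousComponent j G := by
  have component (i : ℕ) : homogeneousComponent (n + j) (C * homogeneousComponent i G) =
      if i = j then C * homogeneousComponent i G else 0 := by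
    rw [homogeneousComponent_of_mem (hC.mul (homogeneousComponent_isHomogeneous i G))]
    simp only [Nat.add_left_cancel_iff, eq_comm]
  conv_lhs => rw [← sum_homogeneousComponent G, Finset.mul_sum, map_sum]
  simp only [component, Finset.sum_ite_eq', Finset.mem_range, ite_eq_left_iff, not_lt]
  intro hj
  rw [homogeneousComponent_eq_zero _ _ (by omega), mul_zero]

lemma exists_isHomogeneous_eq_mul_of_dvd {n j : ℕ} {C F : MvPolynomial σ R}
    (hC : C.IsHomogeneous n) (hF : F.IsHomogeneous (n + j)) (hdvd : C ∣ F) :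
    ∃ G : MvPolynomial σ R, G.IsHomogeneous j ∧ F = C * G := by
  obtain ⟨G, rfl⟩ := hdvd
  refine ⟨homogeneousComponent j G, homogeneousComponent_isHomogeneous j G, ?_⟩
  rw [← homogeneousComponent_add_mul hC, homogeneousComponent_eq_self hF]

lemma dvd_homogeneousComponent_of_dvd {n : ℕ} {C F : MvPolynomial σ R} (hC : C.IsHomogeneous n)
    (hdvd : C ∣ F) (d : ℕ) : C ∣ homogeneousComponent d F := by
  let := gradedAlgebra (σ := σ) (R := R)
  rw [← Ideal.mem_span_singleton] at hdvd ⊢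
  refine homogeneousComponent_mem_of_mem (Ideal.homogeneous_span _ _ ?_) hdvd d
  rintro _ rfl
  exact ⟨n, hC⟩

/-- Division with remainder by a form, performed in the ring of forms. -/
lemma exists_isHomogeneous_dvd_sub (o : MonomialOrder σ) {n d : ℕ} {C F : MvPolynomial σ R}
    (hC : C.IsHomogeneous n) (hunit : IsUnit (o.leadingCoeff C)) (hF : F.IsHomogeneous d) :
    ∃ r : MvPolynomial σ R, r.IsHomogeneous d ∧ C ∣ F - r ∧
      ∀ ν ∈ r.support, ¬ o.degree C ≤ ν := by
  obtain ⟨g, r, hgr, -, hr⟩ := o.div_single hunit F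
  refine ⟨homogeneousComponent d r, homogeneousComponent_isHomogeneous d r, ?_, fun ν hν => ?_⟩
  · have h := dvd_homogeneousComponent_of_dvd hC (dvd_mul_left C g) d
    rwa [eq_sub_of_add_eq hgr.symm, map_sub, homogeneousComponent_eq_self hF] at h
  · refine hr ν (mem_support_iff.2 fun h => mem_support_iff.1 hν ?_)
    simp [coeff_homogeneousComponent, h]

end Homogeneous

section MonomialCurve

/-- The parametrization `t ↦ (t ^ f, t ^ (f + 1), 1)` of the monomial curve. -/
noncomputable def curveParam (f : ℕ) : Fin 3 → Polynomial ℂ :=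
  ![Polynomial.X ^ f, Polynomial.X ^ (f + 1), 1]

/-- The form `x ^ (f + 1) - y ^ f z`, whose zero locus is parametrized by `curveParam f`; it is
the curve `C` for the points in special position. -/
noncomputable def monomialCurve (f : ℕ) : MvPolynomial (Fin 3) ℂ :=
  X 0 ^ (f + 1) - X 1 ^ f * X 2

lemma isHomogeneous_monomialCurve (f : ℕ) : (monomialCurve f).IsHomogeneous (f + 1) :=
  (isHomogeneous_X_pow 0 (f + 1)).sub ((isHomogeneous_X_pow 1 f).mul (isHomogeneous_X ℂ 2))

lemma monomialCurve_eq_sub_monomial (f : ℕ) : monomialCurve f =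
    monomial (Finsupp.single 0 (f + 1)) 1 -
      monomial (Finsupp.single 1 f + Finsupp.single 2 1) 1 := by
  rw [monomialCurve, X_pow_eq_monomial, X_pow_eq_monomial, X, monomial_mul, one_mul]

lemma degree_leadingCoeff_monomialCurve (f : ℕ) :
    MonomialOrder.lex.degree (monomialCurve f) = Finsupp.single 0 (f + 1) ∧
      MonomialOrder.lex.leadingCoeff (monomialCurve f) = 1 := by
  classical
  have hlt : toLex (Finsupp.single (1 : Fin 3) f + Finsupp.single 2 1) <
      toLex (Finsupp.single 0 (f + 1)) := Finsupp.Lex.lt_iff.2 ⟨0, by simp⟩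
  have hdeg (ν : Fin 3 →₀ ℕ) : MonomialOrder.lex.degree (monomial ν (1 : ℂ)) = ν := by
    rw [MonomialOrder.degree_monomial, if_neg one_ne_zero]
  rw [monomialCurve_eq_sub_monomial, MonomialOrder.degree_sub_of_lt,
    MonomialOrder.leadingCoeff_sub_of_lt, hdeg, MonomialOrder.leadingCoeff_monomial]
  · exact ⟨rfl, rfl⟩
  all_goals rwa [hdeg, hdeg, MonomialOrder.lex_lt_iff]

lemma injOn_curveWeight (f d : ℕ) :
    Set.InjOn (fun ν : Fin 3 →₀ ℕ => f * ν 0 + (f + 1) * ν 1) {ν | ν.degree = d ∧ ν 0 ≤ f} := by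
  rintro ν ⟨hν, hνf⟩ ν' ⟨hν', hνf'⟩ hw
  rw [Finsupp.degree_eq_sum, Fin.sum_univ_three] at hν hν'
  have hw' : ν' 0 + (f + 1) * (ν 0 + ν 1) = ν 0 + (f + 1) * (ν' 0 + ν' 1) := by
    simp only at hw
    linarith
  have h0 : ν' 0 = ν 0 := by
    simpa [Nat.mod_eq_of_lt, Nat.lt_succ_of_le, hνf, hνf'] using congrArg (· % (f + 1)) hw'
  have h1 : ν' 1 = ν 1 := by
    simpa [h0] using hw.symm
  ext i
  fin_cases i
  · exact h0.symm
  · exact h1.symm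
  · change ν 2 = ν' 2
    omega

/-- No cancellation can occur, because the exponents `f a + (f + 1) b` with `a ≤ f` are distinct. -/
lemma eq_zero_of_aeval_curveParam_eq_zero {f d : ℕ} {r : MvPolynomial (Fin 3) ℂ}
    (hr : r.IsHomogeneous d) (hdeg : ∀ ν ∈ r.support, ν 0 ≤ f) (h : aeval (curveParam f) r = 0) :
    r = 0 := by
  have expand : aeval (curveParam f) r =
      ∑ ν ∈ r.support, Polynomial.monomial (f * ν 0 + (f + 1) * ν 1) (coeff ν r) := by
    rw [aeval_def, eval₂_eq']
    refine Finset.sum_congr rfl fun ν _ => ?_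
    rw [← Polynomial.C_mul_X_pow_eq_monomial, pow_add, pow_mul, pow_mul]
    simp [curveParam, Fin.prod_univ_three]
  have h_supp {ν : Fin 3 →₀ ℕ} (hν : ν ∈ r.support) : ν.degree = d ∧ ν 0 ≤ f :=
    ⟨not_imp_comm.1 hr.coeff_eq_zero (mem_support_iff.1 hν), hdeg ν hν⟩
  rw [← support_eq_empty, Finset.eq_empty_iff_forall_notMem]
  intro ν hν
  have h_coeff := congrArg (Polynomial.coeff · (f * ν 0 + (f + 1) * ν 1)) (expand.symm.trans h)
  simp only [Polynomial.finsetSum_coeff, Polynomial.coeff_monomial,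
    Polynomial.coeff_zero] at h_coeff
  rw [Finset.sum_eq_single_of_mem ν hν, if_pos rfl] at h_coeff
  · exact mem_support_iff.1 hν h_coeff
  · intro ν' hν' hne
    exact if_neg fun hw => hne (injOn_curveWeight f d (h_supp hν') (h_supp hν) hw)

lemma monomialCurve_dvd_of_aeval_eq_zero {f d : ℕ} {F : MvPolynomial (Fin 3) ℂ}
    (hF : F.IsHomogeneous d) (h : aeval (curveParam f) F = 0) : monomialCurve f ∣ F := by
  obtain ⟨hdeg, hlead⟩ := degree_leadingCoeff_monomialCurve f
  obtain ⟨r, hr, hdvd, hsupp⟩ := exists_isHomogeneous_dvd_sub MonomialOrder.lex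
    (isHomogeneous_monomialCurve f) (hlead ▸ isUnit_one) hF
  have h_curve : aeval (curveParam f) (monomialCurve f) = 0 := by
    simp [monomialCurve, curveParam, ← pow_mul, mul_comm]
  have h_rem : r = 0 := by
    refine eq_zero_of_aeval_curveParam_eq_zero (f := f) hr (fun ν hν => ?_) ?_
    · have := hsupp ν hν
      rw [hdeg, Finsupp.single_le_iff] at this
      omega
    · obtain ⟨G, hG⟩ := hdvd
      rw [sub_eq_iff_eq_add] at hG
      simpa [hG, h_curve] using h
  rwa [h_rem, sub_zero] at hdvd

/-- The point `(0, 0, 1)`, of multiplicity `f` on the monomial curve, followed by the points of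
the curve with parameters `s i`. -/
noncomputable def curvePoints {f : ℕ} (s : Fin (2 * (f + 1)) → ℂ) :
    Fin (2 * (f + 1) + 1) → Fin 3 → ℂ :=
  Fin.cons ![0, 0, 1] fun i k => (curveParam f k).eval (s i)

/-- The zeros on the monomial curve imposed on the members of
`curvePencilSys (curvePoints s) μ j`. -/
noncomputable def imposedZeros {f : ℕ} (s : Fin (2 * (f + 1)) → ℂ) (μ j : ℕ) : Polynomial ℂ :=
  (Polynomial.X ^ f) ^ (μ * f + j) * ∏ i, (Polynomial.X - Polynomial.C (s i)) ^ μ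

lemma multAt_monomialCurve_le (f : ℕ) : multAt ![0, 0, 1] (monomialCurve f) ≤ f := by
  have h_coeff : coeff (Finsupp.single 1 f) (taylorAt ![0, 0, 1] (monomialCurve f)) = -1 := by
    classical
    have h0 : Finsupp.single (0 : Fin 3) f + Finsupp.single 0 1 ≠ Finsupp.single 1 f := fun h => by
      simpa using DFunLike.congr_fun h 0
    have h_taylor : taylorAt ![0, 0, 1] (monomialCurve f) =
        X 0 ^ (f + 1) - X 1 ^ f * X 2 - X 1 ^ f := by
      simp [monomialCurve, mul_add, sub_sub]
    rw [h_taylor]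
    simp [coeff_X_pow, coeff_mul_X', h0]
  refine (multAt_le_degree (h_coeff.trans_ne (neg_ne_zero.2 one_ne_zero))).trans_eq ?_
  simp

lemma multAt_monomialCurve_param_le_one (f : ℕ) {t : ℂ} (ht : t ≠ 0) :
    multAt (fun k => (curveParam f k).eval t) (monomialCurve f) ≤ 1 := by
  refine multAt_le_one 2 ?_
  simp [monomialCurve, curveParam, pderiv_X, ht]

variable {f : ℕ} {s : Fin (2 * (f + 1)) → ℂ}

lemma monic_imposedZeros (s : Fin (2 * (f + 1)) → ℂ) (μ j : ℕ) : (imposedZeros s μ j).Monic :=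
  ((Polynomial.monic_X_pow _).pow _).mul
    (Polynomial.monic_prod_of_monic _ _ fun _ _ => (Polynomial.monic_X_sub_C _).pow _)

lemma natDegree_imposedZeros (s : Fin (2 * (f + 1)) → ℂ) (μ j : ℕ) :
    (imposedZeros s μ j).natDegree + j = (μ * (f + 1) + j) * (f + 1) + μ := by
  have h : (imposedZeros s μ j).natDegree = (μ * f + j) * f + 2 * (f + 1) * μ := by
    rw [imposedZeros, Polynomial.Monic.natDegree_mul ((Polynomial.monic_X_pow _).pow _)
      (Polynomial.monic_prod_of_monic _ _ fun _ _ => (Polynomial.monic_X_sub_C _).pow _),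
      Polynomial.natDegree_prod_of_monic _ _ fun i _ => (Polynomial.monic_X_sub_C _).pow _]
    simp
  rw [h]
  ring

lemma imposedZeros_dvd_aeval (hinj : Function.Injective s) (hs : ∀ i, s i ≠ 0) {μ j : ℕ}
    {F : MvPolynomial (Fin 3) ℂ} (hF : F ∈ curvePencilSys (curvePoints s) μ j) :
    imposedZeros s μ j ∣ aeval (curveParam f) F := by
  obtain ⟨-, h0, hi⟩ := mem_curvePencilSys.1 hF
  refine IsCoprime.mul_dvd ?_ (pow_dvd_aeval h0 fun k => ?_)
    (Finset.prod_dvd_of_coprime (fun i _ i' _ hne => ?_) fun i _ =>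
      pow_dvd_aeval (hi i) fun k => ?_)
  · refine IsCoprime.prod_right fun i _ => IsCoprime.pow (IsCoprime.pow_left ?_)
    simpa using Polynomial.isCoprime_X_sub_C_of_isUnit_sub
      (sub_ne_zero.2 (hs i).symm).isUnit
  · fin_cases k
    · simp [curvePoints, curveParam]
    · simp [curvePoints, curveParam, pow_succ]
    · simp [curvePoints, curveParam]
  · exact (Polynomial.pairwise_coprime_X_sub_C hinj hne).pow
  · exact Polynomial.X_sub_C_dvd_sub_C_eval

lemma mem_curvePencilSys_of_mul_mem (hs : ∀ i, s i ≠ 0) {μ j : ℕ} {G : MvPolynomial (Fin 3) ℂ}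
    (hG : G.IsHomogeneous (μ * (f + 1) + j))
    (h : monomialCurve f * G ∈ curvePencilSys (curvePoints s) (μ + 1) j) :
    G ∈ curvePencilSys (curvePoints s) μ j := by
  simp only [mem_curvePencilSys, multAt_mul] at h ⊢
  obtain ⟨-, h0, hi⟩ := h
  refine ⟨hG, ?_, fun i => ?_⟩
  · refine (ENat.add_le_add_iff_left (ENat.natCast_ne_top f)).1 ?_
    calc ((f : ℕ∞) + (μ * f + j : ℕ)) = ((μ + 1) * f + j : ℕ) := by norm_cast; ring
      _ ≤ _ := h0
      _ ≤ _ := by gcongr; exact multAt_monomialCurve_le f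
  · refine (ENat.add_le_add_iff_left ENat.one_ne_top).1 ?_
    calc (1 + μ : ℕ∞) = (μ + 1 : ℕ) := by norm_cast; ring
      _ ≤ _ := hi i
      _ ≤ _ := by gcongr; exact multAt_monomialCurve_param_le_one f (hs i)

lemma finrank_le_of_monic_dvd {K : Type*} [Field K] {U : Submodule K (Polynomial K)}
    {Q : Polynomial K} (hQ : Q.Monic) {n : ℕ} (hdvd : ∀ g ∈ U, Q ∣ g)
    (hdeg : ∀ g ∈ U, g.natDegree < Q.natDegree + n) : Module.finrank K U ≤ n := by
  have hle : U ≤ (Polynomial.degreeLT K n).map (LinearMap.mulLeft K Q) := by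
    intro g hg
    obtain ⟨h, rfl⟩ := hdvd g hg
    refine ⟨h, ?_, rfl⟩
    rcases eq_or_ne h 0 with rfl | h0
    · exact zero_mem _
    · have := hdeg _ hg
      rw [hQ.natDegree_mul' h0] at this
      exact Polynomial.mem_degreeLT.2 ((Polynomial.natDegree_lt_iff_degree_lt h0).1 (by omega))
  have := Module.Finite.equiv (Polynomial.degreeLTEquiv K n).symm
  calc Module.finrank K U ≤ _ := Submodule.finrank_mono hle
    _ ≤ _ := Submodule.finrank_map_le _ _
    _ = n := by rw [(Polynomial.degreeLTEquiv K n).finrank_eq, Module.finrank_fin_fun]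

lemma finrank_map_aeval_curveParam_le (hinj : Function.Injective s) (hs : ∀ i, s i ≠ 0) (μ j : ℕ) :
    Module.finrank ℂ ((curvePencilSys (curvePoints s) μ j).map
      (aeval (curveParam f)).toLinearMap) ≤ j + 1 - μ := by
  refine finrank_le_of_monic_dvd (monic_imposedZeros s μ j) ?_ ?_
  · rintro _ ⟨F, hF, rfl⟩
    exact imposedZeros_dvd_aeval hinj hs hF
  · rintro _ ⟨F, hF, rfl⟩
    have h_param (k) : (curveParam f k).natDegree ≤ f + 1 := by
      fin_cases k <;> simp [curveParam]
    have h_deg := aeval_natDegree_le F (mem_curvePencilSys.1 hF).1.totalDegree_le _ h_param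
    have := natDegree_imposedZeros s μ j
    simp only [AlgHom.toLinearMap_apply]
    omega

lemma curvePencilSys_zero_inf_ker (s : Fin (2 * (f + 1)) → ℂ) (j : ℕ) :
    curvePencilSys (curvePoints s) 0 j ⊓ LinearMap.ker (aeval (curveParam f)).toLinearMap = ⊥ := by
  rw [eq_bot_iff]
  rintro F ⟨hF, hker⟩
  obtain ⟨hF_hom, hF_mult, -⟩ := mem_curvePencilSys.1 hF
  rw [zero_mul, zero_add] at hF_hom hF_mult
  obtain ⟨G, rfl⟩ := monomialCurve_dvd_of_aeval_eq_zero hF_hom hker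
  by_contra hFG
  have hG : G ≠ 0 := right_ne_zero_of_mul hFG
  have hC : monomialCurve f ≠ 0 := left_ne_zero_of_mul hFG
  have h_mult : (j : ℕ∞) ≤ (f + G.totalDegree : ℕ) :=
    calc (j : ℕ∞) ≤ multAt ![0, 0, 1] (monomialCurve f) + multAt ![0, 0, 1] G := by
          rw [← multAt_mul]
          exact hF_mult
      _ ≤ f + G.totalDegree :=
          add_le_add (multAt_monomialCurve_le f) (multAt_le_totalDegree _ hG)
      _ = (f + G.totalDegree : ℕ) := (Nat.cast_add _ _).symm
  have h_deg : f + 1 + G.totalDegree = j := by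
    rw [← (isHomogeneous_monomialCurve f).totalDegree hC, ← hF_hom.totalDegree hFG,
      totalDegree_mul_of_isDomain hC hG]
  have := Nat.cast_le.1 h_mult
  omega

lemma finrank_curvePencilSys_inf_ker_le (hs : ∀ i, s i ≠ 0) (μ j : ℕ) :
    Module.finrank ℂ ↥(curvePencilSys (curvePoints s) (μ + 1) j ⊓
      LinearMap.ker (aeval (curveParam f)).toLinearMap) ≤
        Module.finrank ℂ (curvePencilSys (curvePoints s) μ j) := by
  have hle : curvePencilSys (curvePoints s) (μ + 1) j ⊓
      LinearMap.ker (aeval (curveParam f)).toLinearMap ≤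
        (curvePencilSys (curvePoints s) μ j).map (LinearMap.mulLeft ℂ (monomialCurve f)) := by
    rintro F ⟨hF, hker⟩
    have hF_hom := (mem_curvePencilSys.1 hF).1
    have hdvd := monomialCurve_dvd_of_aeval_eq_zero hF_hom hker
    rw [show (μ + 1) * (f + 1) + j = f + 1 + (μ * (f + 1) + j) by ring] at hF_hom
    obtain ⟨G, hG, rfl⟩ :=
      exists_isHomogeneous_eq_mul_of_dvd (isHomogeneous_monomialCurve f) hF_hom hdvd
    exact ⟨G, mem_curvePencilSys_of_mul_mem hs hG hF, rfl⟩
  exact (Submodule.finrank_mono hle).trans (Submodule.finrank_map_le _ _)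

lemma finrank_curvePencilSys_curvePoints_le (hinj : Function.Injective s) (hs : ∀ i, s i ≠ 0)
    (μ j : ℕ) : Module.finrank ℂ (curvePencilSys (curvePoints s) μ j) + (j + 1 - μ).choose 2 ≤
      (j + 2).choose 2 := by
  have h_image (μ) := finrank_map_aeval_curveParam_le hinj hs μ j
  have h_rank (μ) := finrank_map_add_finrank_inf_ker (curvePencilSys (curvePoints s) μ j)
    (aeval (curveParam f)).toLinearMap
  induction μ with
  | zero =>
    rw [← h_rank, curvePencilSys_zero_inf_ker, finrank_bot, Nat.choose_succ_succ' (j + 1) 1,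
      Nat.choose_one_right]
    simpa using h_image 0
  | succ μ ih =>
    have h_ker := finrank_curvePencilSys_inf_ker_le hs μ j
    have h_im := h_image (μ + 1)
    have h_dim := h_rank (μ + 1)
    have hp : (j + 1 - μ).choose 2 = (j + 1 - (μ + 1)) + (j + 1 - (μ + 1)).choose 2 := by
      rw [← Nat.sub_sub (j + 1)]
      cases j + 1 - μ with
      | zero => rfl
      | succ n => rw [Nat.choose_succ_succ' n 1, Nat.choose_one_right, Nat.add_sub_cancel]
    omega

end MonomialCurve

section Semicontinuity

lemma Generically.and {k : ℕ} {Q Q' : (Fin k → Fin 3 → ℂ) → Prop} (h : Generically k Q)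
    (h' : Generically k Q') : Generically k fun p => Q p ∧ Q' p := by
  obtain ⟨P, hP, hQ⟩ := h
  obtain ⟨P', hP', hQ'⟩ := h'
  refine ⟨P * P', mul_ne_zero hP hP', fun p hp hPP' => ?_⟩
  rw [map_mul] at hPP'
  exact ⟨hQ p hp (left_ne_zero_of_mul hPP'), hQ' p hp (right_ne_zero_of_mul hPP')⟩

lemma Generically.mono {k : ℕ} {Q Q' : (Fin k → Fin 3 → ℂ) → Prop} (h : Generically k Q)
    (hQ : ∀ p, Q p → Q' p) : Generically k Q' := by
  obtain ⟨P, hP, hPQ⟩ := h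
  exact ⟨P, hP, fun p hp hp' => hQ p (hPQ p hp hp')⟩

lemma exists_matrix_mul_mul_eq_one {K m n : Type*} [Field K] [Fintype m] [Fintype n]
    (A : Matrix m n K) :
    ∃ (B : Matrix (Fin A.rank) m K) (D : Matrix n (Fin A.rank) K), B * A * D = 1 := by
  classical
  let e : LinearMap.range A.mulVecLin ≃ₗ[K] (Fin A.rank → K) :=
    LinearEquiv.ofFinrankEq _ _ (by rw [Module.finrank_fin_fun, Matrix.rank])
  obtain ⟨retract, h_retract⟩ := (LinearMap.range A.mulVecLin).subtype
    |>.exists_leftInverse_of_injective (Submodule.ker_subtype _)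
  obtain ⟨lift, h_lift⟩ := A.mulVecLin.rangeRestrict.exists_rightInverse_of_surjective
    A.mulVecLin.range_rangeRestrict
  refine ⟨LinearMap.toMatrix' (e.toLinearMap ∘ₗ retract),
    LinearMap.toMatrix' (lift ∘ₗ e.symm.toLinearMap), Matrix.toLin'.injective ?_⟩
  refine LinearMap.ext fun v => ?_
  have lift_apply : A.mulVecLin (lift (e.symm v)) = e.symm v :=
    congrArg Subtype.val (LinearMap.congr_fun h_lift (e.symm v))
  have retract_apply : retract (e.symm v : m → K) = e.symm v :=
    LinearMap.congr_fun h_retract (e.symm v)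
  rw [Matrix.mulVecLin_apply] at lift_apply
  simp [Matrix.toLin'_mul, Matrix.toLin'_apply, lift_apply, retract_apply]

lemma exists_rank_map_le_rank_map {K S m n : Type*} [Field K] [CommRing S] [Algebra K S]
    [Finite m] [Fintype n] (M : Matrix m n S) (φ₀ : S →ₐ[K] K) :
    ∃ P : S, φ₀ P ≠ 0 ∧ ∀ φ : S →ₐ[K] K, φ P ≠ 0 → (M.map φ₀).rank ≤ (M.map φ).rank := by
  classical
  have := Fintype.ofFinite m
  obtain ⟨B, D, hBD⟩ := exists_matrix_mul_mul_eq_one (M.map φ₀)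
  let P : S := (B.map (algebraMap K S) * M * D.map (algebraMap K S)).det
  have eval_P (φ : S →ₐ[K] K) : φ P = (B * M.map φ * D).det := by
    simp [P, AlgHom.map_det, Matrix.map_mul, Function.comp_def]
  refine ⟨P, ?_, fun φ hφ => ?_⟩
  · rw [eval_P, hBD, Matrix.det_one]
    exact one_ne_zero
  · rw [eval_P] at hφ
    calc (M.map φ₀).rank = (B * M.map φ * D).rank := by
          rw [Matrix.rank_of_isUnit _ ((Matrix.isUnit_iff_isUnit_det _).2 hφ.isUnit),
            Fintype.card_fin]
      _ ≤ (B * M.map φ).rank := Matrix.rank_mul_le_left _ _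
      _ ≤ (M.map φ).rank := Matrix.rank_mul_le_right _ _

/-- The indices `(i, ν)` of the conditions that define a linear system with multiplicities `m`. -/
abbrev JetIndex {k : ℕ} (m : Fin k → ℕ) : Type :=
  Σ i, {ν : Fin 3 → ℕ // ν 0 + ν 1 + ν 2 < m i}

instance {k : ℕ} (m : Fin k → ℕ) : Finite (JetIndex m) := by
  have finite_orders (i : Fin k) : Finite {ν : Fin 3 → ℕ // ν 0 + ν 1 + ν 2 < m i} := by
    refine ((Set.finite_Iic fun _ => m i).subset fun ν hν l => ?_).to_subtype
    have hν : ν 0 + ν 1 + ν 2 < m i := hν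
    fin_cases l <;> dsimp only [Fin.reduceFinMk, Fin.zero_eta, Fin.mk_one] <;> omega
  infer_instance

/-- The map sending a form to all its partial derivatives of order `< m i` at the points `p i`;
its kernel on the forms of degree `d` is `linSys p d m`. -/
noncomputable def jetMap {k : ℕ} (p : Fin k → Fin 3 → ℂ) (m : Fin k → ℕ) :
    MvPolynomial (Fin 3) ℂ →ₗ[ℂ] JetIndex m → ℂ :=
  LinearMap.pi fun c => (aeval (p c.1)).toLinearMap ∘ₗ mderiv c.2.1

lemma linSys_eq_inf_ker_jetMap {k : ℕ} (p : Fin k → Fin 3 → ℂ) (d : ℕ) (m : Fin k → ℕ) :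
    linSys p d m = homogeneousSubmodule (Fin 3) ℂ d ⊓ LinearMap.ker (jetMap p m) := by
  simp only [linSys, jetMap, LinearMap.ker_pi, iInf_sigma, iInf_subtype]

lemma generically_finrank_linSys_le {k : ℕ} (p₀ : Fin k → Fin 3 → ℂ) (d : ℕ)
    (m : Fin k → ℕ) : Generically k fun p =>
      Module.finrank ℂ (linSys p d m) ≤ Module.finrank ℂ (linSys p₀ d m) := by
  let ev (p : Fin k → Fin 3 → ℂ) : MvPolynomial (Fin k × Fin 3) ℂ →ₐ[ℂ] ℂ :=
    aeval fun x => p x.1 x.2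
  obtain ⟨n, b, hb⟩ := Submodule.fg_iff_exists_fin_generating_family.1
    (show (homogeneousSubmodule (Fin 3) ℂ d).FG from Module.Finite.iff_fg.1 inferInstance)
  let jetMatrix : Matrix (JetIndex m) (Fin n) (MvPolynomial (Fin k × Fin 3) ℂ) :=
    Matrix.of fun c l => rename (Prod.mk c.1) (mderiv c.2.1 (b l))
  have col_jetMatrix (p) : (jetMatrix.map (ev p)).col = jetMap p m ∘ b := by
    ext l c
    simp [jetMatrix, ev, jetMap, eval_rename, Function.comp_def]
  have rank_add (p) : (jetMatrix.map (ev p)).rank + Module.finrank ℂ (linSys p d m) =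
      Module.finrank ℂ (homogeneousSubmodule (Fin 3) ℂ d) := by
    rw [linSys_eq_inf_ker_jetMap, Matrix.rank, Matrix.range_mulVecLin, col_jetMatrix,
      Set.range_comp, ← Submodule.map_span, hb]
    exact finrank_map_add_finrank_inf_ker _ _
  obtain ⟨P, hP₀, hP⟩ := exists_rank_map_le_rank_map jetMatrix (ev p₀)
  refine ⟨P, ne_of_apply_ne (ev p₀) (by rwa [map_zero]), fun p _ hp => ?_⟩
  have rank_le := hP (ev p) hp
  have add_p := rank_add p
  have add_p₀ := rank_add p₀
  omega

end Semicontinuity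

section GeneralPosition

lemma generically_finrank_curvePencilSys (f μ j : ℕ) :
    Generically (2 * (f + 1) + 1) fun p =>
      Module.finrank ℂ (curvePencilSys p μ j) + (j + 1 - μ).choose 2 = (j + 2).choose 2 := by
  let s (i : Fin (2 * (f + 1))) : ℂ := (i : ℕ) + 1
  have s_injective : Function.Injective s := fun i i' h => by simpa [s, Fin.ext_iff] using h
  have s_ne_zero (i) : s i ≠ 0 := Nat.cast_add_one_ne_zero (i : ℕ)
  have special_le := finrank_curvePencilSys_curvePoints_le s_injective s_ne_zero μ j
  have semicontinuity : Generically (2 * (f + 1) + 1) fun p =>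
      Module.finrank ℂ (curvePencilSys p μ j) ≤
        Module.finrank ℂ (curvePencilSys (curvePoints s) μ j) :=
    generically_finrank_linSys_le _ _ _
  refine semicontinuity.mono fun p hp => ?_
  refine le_antisymm ?_ (choose_two_le_finrank_curvePencilSys p μ j)
  exact (Nat.add_le_add_right hp _).trans special_le

end GeneralPosition

theorem special_L_6e_families_general {e μ j m₀ : ℕ} (he : 1 ≤ e) (hj : j + 2 ≤ μ)
    (hm₀ : m₀ + μ = μ * e + j) :
    virtDim (μ * e + j) (quasiHom (2 * e) m₀ μ) = ((j + 2).choose 2 : ℤ) - 1 - (μ - j).choose 2 ∧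
      Generically (2 * e + 1) fun p =>
        projDim p (μ * e + j) (quasiHom (2 * e) m₀ μ) = ((j + 2).choose 2 : ℤ) - 1 ∧
          projDim p (μ * e + j) (quasiHom (2 * e) m₀ μ) >
            max (-1) (virtDim (μ * e + j) (quasiHom (2 * e) m₀ μ)) := by
  obtain ⟨f, rfl⟩ := Nat.exists_eq_add_of_le' he
  obtain rfl : m₀ = μ * f + j := by linarith
  have hv := virtDim_quasiHom (f := f) (show j + 1 ≤ μ by omega)
  refine ⟨hv, (generically_finrank_curvePencilSys f μ j).mono fun p hp => ?_⟩
  rw [Nat.choose_eq_zero_of_lt (show j + 1 - μ < 2 by omega), add_zero] at hp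
  have hproj : projDim p (μ * (f + 1) + j) (quasiHom (2 * (f + 1)) (μ * f + j) μ) =
      ((j + 2).choose 2 : ℤ) - 1 := by
    rw [projDim, ← hp, curvePencilSys]
  have pos : 0 < (j + 2).choose 2 := Nat.choose_pos (by omega)
  have pos' : 0 < (μ - j).choose 2 := Nat.choose_pos (by omega)
  rw [hproj, hv]
  refine ⟨rfl, max_lt ?_ ?_⟩ <;> omega

theorem special_L_6e_families (e : ℕ) (he : 1 ≤ e) :
    virtDim (6 * e) (qh (2 * e) (6 * e - 6)) = -15 ∧
    virtDim (6 * e + 1) (qh (2 * e) (6 * e - 5)) = -8 ∧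
    virtDim (6 * e + 2) (qh (2 * e) (6 * e - 4)) = -1 ∧
    virtDim (6 * e + 3) (qh (2 * e) (6 * e - 3)) = 6 ∧
    virtDim (6 * e + 4) (qh (2 * e) (6 * e - 2)) = 13 ∧
    Generically (2 * e + 1) (fun p =>
      (projDim p (6 * e) (qh (2 * e) (6 * e - 6)) = 0 ∧
        projDim p (6 * e) (qh (2 * e) (6 * e - 6)) >
          max (-1) (virtDim (6 * e) (qh (2 * e) (6 * e - 6)))) ∧
      (projDim p (6 * e + 1) (qh (2 * e) (6 * e - 5)) = 2 ∧
        projDim p (6 * e + 1) (qh (2 * e) (6 * e - 5)) >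
          max (-1) (virtDim (6 * e + 1) (qh (2 * e) (6 * e - 5)))) ∧
      (projDim p (6 * e + 2) (qh (2 * e) (6 * e - 4)) = 5 ∧
        projDim p (6 * e + 2) (qh (2 * e) (6 * e - 4)) >
          max (-1) (virtDim (6 * e + 2) (qh (2 * e) (6 * e - 4)))) ∧
      (projDim p (6 * e + 3) (qh (2 * e) (6 * e - 3)) = 9 ∧
        projDim p (6 * e + 3) (qh (2 * e) (6 * e - 3)) >
          max (-1) (virtDim (6 * e + 3) (qh (2 * e) (6 * e - 3)))) ∧
      (projDim p (6 * e + 4) (qh (2 * e) (6 * e - 2)) = 14 ∧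
        projDim p (6 * e + 4) (qh (2 * e) (6 * e - 2)) >
          max (-1) (virtDim (6 * e + 4) (qh (2 * e) (6 * e - 2))))) := by
  have system {j m₀ : ℕ} (hj : j + 2 ≤ 6) (hm₀ : m₀ + 6 = 6 * e + j) :=
    special_L_6e_families_general he hj hm₀
  obtain ⟨v₀, g₀⟩ := system (j := 0) (m₀ := 6 * e - 6) (by norm_num) (by omega)
  obtain ⟨v₁, g₁⟩ := system (j := 1) (m₀ := 6 * e - 5) (by norm_num) (by omega)
  obtain ⟨v₂, g₂⟩ := system (j := 2) (m₀ := 6 * e - 4) (by norm_num) (by omega)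
  obtain ⟨v₃, g₃⟩ := system (j := 3) (m₀ := 6 * e - 3) (by norm_num) (by omega)
  obtain ⟨v₄, g₄⟩ := system (j := 4) (m₀ := 6 * e - 2) (by norm_num) (by omega)
  exact ⟨v₀, v₁, v₂, v₃, v₄, g₀.and (g₁.and (g₂.and (g₃.and g₄)))⟩
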